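/- arXiv:math/0008039 — 3 statements merged into one kernel-verified Lean document; each statement's English description precedes it below -/
import Mathlib

section
/- Let L be a bounded partial order (a partial order with least element ⊥ and greatest element ⊤, ⊥ ≠ ⊤) containing an element a with ⊥ < a < ⊤. Define f : Set L₀ → Set L₀ by f(T) = {a} if a ∈ T (a viewed as an element of L₀) and f(T) = ∅ otherwise. Then f is union-preserving, but there is no family (hᵢ)_{i ∈ I} of monotone maps hᵢ : L → L with hᵢ(⊥) = ⊥ such that f(T) = ⋃ᵢ 𝒫hᵢ(T) for every T : Set L₀. -/
/-- The nonzero elements of `L`. -/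
abbrev NZ (L : Type*) [Bot L] : Type _ := {x : L // x ≠ ⊥}

/-- A map between powersets of nonzero elements is union-preserving if it
preserves arbitrary unions. -/
def UnionPres {L M : Type*} [Bot L] [Bot M]
    (f : Set (NZ L) → Set (NZ M)) : Prop :=
  ∀ {ι : Type*} (T : ι → Set (NZ L)), f (⋃ i, T i) = ⋃ i, f (T i)

/-- The direct image map of `g : L → M` on sets of nonzero elements:
`T ↦ {g t | t ∈ T, g t ≠ ⊥}`. -/
def dirIm {L M : Type*} [Bot L] [Bot M] (g : L → M) :
    Set (NZ L) → Set (NZ M) :=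
  fun T => {y | ∃ t ∈ T, g t.val = y.val}

/-! An arbitrary union `F` of direct images of monotone maps respects cofinality: if every element
of `T` lies below some element of `T'`, then every element of `F T` lies below some element of
`F T'`. For `F = (· ∩ S)`, applied to `T = {x}` and `T' = {y}` with `x ≤ y`, this forces `S` to be
an upper set, whereas `{a}` is not one as soon as something lies strictly above `a`. -/

theorem unionPres_inter_right {L : Type*} [Bot L] (S : Set (NZ L)) : UnionPres (· ∩ S) :=
  Set.iUnion_inter S

theorem isCofinalFor_dirIm {L M : Type*} [Preorder L] [Bot L] [PartialOrder M] [OrderBot M]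
    {g : L → M} (hg : Monotone g) {T T' : Set (NZ L)} (hT : IsCofinalFor T T') :
    IsCofinalFor (dirIm g T) (dirIm g T') := by
  rintro y ⟨t, ht, hty⟩
  obtain ⟨t', ht', htt'⟩ := hT ht
  have hy : y.val ≤ g t' := hty.symm.trans_le (hg htt')
  exact ⟨⟨g t', ne_bot_of_le_ne_bot y.prop hy⟩, ⟨t', ht', rfl⟩, hy⟩

theorem isCofinalFor_biUnion_dirIm {L M : Type*} [Preorder L] [Bot L] [PartialOrder M] [OrderBot M]
    {G : Set (L → M)} (hG : ∀ h ∈ G, Monotone h) {T T' : Set (NZ L)} (hT : IsCofinalFor T T') :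
    IsCofinalFor (⋃ h ∈ G, dirIm h T) (⋃ h ∈ G, dirIm h T') := by
  intro y hy
  obtain ⟨h, hh, hyT⟩ := Set.mem_iUnion₂.1 hy
  obtain ⟨z, hz, hyz⟩ := isCofinalFor_dirIm (hG h hh) hT hyT
  exact ⟨z, Set.mem_biUnion hh hz, hyz⟩

theorem isUpperSet_of_isCofinalFor_inter {α : Type*} [LE α] {S : Set α}
    (hS : ∀ ⦃T T' : Set α⦄, IsCofinalFor T T' → IsCofinalFor (T ∩ S) (T' ∩ S)) : IsUpperSet S := by
  intro x y hxy hx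
  have hcof : IsCofinalFor {x} {y} := by simpa [IsCofinalFor] using hxy
  obtain ⟨z, ⟨rfl, hz⟩, -⟩ := hS hcof ⟨rfl, hx⟩
  exact hz

theorem not_isUpperSet_singleton {α : Type*} [Preorder α] {a b : α} (h : a < b) :
    ¬IsUpperSet {a} :=
  fun ha => h.ne' (ha h.le rfl)

theorem setOf_mem_and_eq {α : Type*} (a : α) (T : Set α) : {y | a ∈ T ∧ y = a} = T ∩ {a} :=
  Set.ext fun _ => and_congr_left fun hy => hy ▸ Iff.rfl

theorem stmt8_general {L : Type*} [PartialOrder L] [OrderBot L] {S : Set (NZ L)}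
    (hS : ¬IsUpperSet S) :
    UnionPres (· ∩ S) ∧
      ¬ ∃ G : Set (L → L),
        (∀ h ∈ G, Monotone h) ∧ ∀ T : Set (NZ L), T ∩ S = ⋃ h ∈ G, dirIm h T := by
  refine ⟨unionPres_inter_right S, fun ⟨G, hG, hGS⟩ => hS ?_⟩
  refine isUpperSet_of_isCofinalFor_inter fun T T' hT => ?_
  rw [hGS T, hGS T']
  exact isCofinalFor_biUnion_dirIm hG hT

theorem stmt8 {L : Type*} [PartialOrder L] [BoundedOrder L]
    (hbt : (⊥ : L) ≠ ⊤) (a : L) (ha1 : ⊥ < a) (ha2 : a < ⊤)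
    (f : Set (NZ L) → Set (NZ L))
    (hfdef : ∀ T : Set (NZ L),
      f T = {y | (⟨a, ha1.ne'⟩ : NZ L) ∈ T ∧ y = (⟨a, ha1.ne'⟩ : NZ L)}) :
    UnionPres f ∧
      ¬ ∃ G : Set (L → L),
        (∀ h ∈ G, Monotone h ∧ h ⊥ = ⊥) ∧
        ∀ T : Set (NZ L), f T = ⋃ h ∈ G, dirIm h T := by
  obtain rfl : f = (· ∩ {⟨a, ha1.ne'⟩}) :=
    funext fun T => (hfdef T).trans (setOf_mem_and_eq _ T)
  have hlt : (⟨a, ha1.ne'⟩ : NZ L) < ⟨⊤, hbt.symm⟩ := ha2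
  exact (stmt8_general (not_isUpperSet_singleton hlt)).imp_right <|
    mt fun ⟨G, hG, hGf⟩ => ⟨G, fun h hh => (hG h hh).1, hGf⟩
end

section
/- Let L be a complete lattice containing elements a, b, c with a < b ⊔ c, ¬(a ≤ b) and ¬(a ≤ c) (these hypotheses imply a, b, c and b ⊔ c are all ≠ ⊥). Define f : Set L₀ → Set L₀ by f(T) = (T \ {b ⊔ c}) ∪ S, where S = {a, b, c} if b ⊔ c ∈ T and S = ∅ otherwise (all elements viewed in L₀). Then f is union-preserving and ⋁f(T) = ⋁T for every T : Set L₀; hence f is a state transition whose property transition is the identity map of L. -/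
/-- The supremum in `L` of a set of nonzero elements of `L`. -/
def lsup {L : Type*} [CompleteLattice L] (T : Set (NZ L)) : L :=
  sSup (Subtype.val '' T)

/-- `g` preserves arbitrary suprema. -/
def PresSup {L M : Type*} [CompleteLattice L] [CompleteLattice M]
    (g : L → M) : Prop :=
  ∀ S : Set L, g (sSup S) = ⨆ s ∈ S, g s

/-!
A map of the form `T ↦ ⋃ t ∈ T, φ t` preserves unions for any `φ`, and it preserves suprema as soon
as each `φ t` has supremum `t`. Replacing the point `b ⊔ c` by `{a, b, c}` is such a map, where `φ`
sends `b ⊔ c` to `{a, b, c}` and every other `t` to `{t}`.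
-/

section UnionPres

variable {L M : Type*} [Bot L] [Bot M]

theorem unionPres_biUnion (φ : NZ L → Set (NZ M)) : UnionPres fun T => ⋃ t ∈ T, φ t :=
  fun T => Set.biUnion_iUnion T φ

/-- The map on sets of nonzero elements that replaces the point `p`, when present, by the nonzero
elements of `S`. Both `p` and `S` live in `L`, so that neither has to be shown to avoid `⊥`. -/
def replacePoint (p : L) (S : Set L) (T : Set (NZ L)) : Set (NZ L) :=
  {y | y ∈ T ∧ y.val ≠ p} ∪ {y | (∃ t ∈ T, t.val = p) ∧ y.val ∈ S}

open Classical in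
theorem replacePoint_eq_biUnion (p : L) (S : Set L) (T : Set (NZ L)) :
    replacePoint p S T = ⋃ t ∈ T, if t.val = p then Subtype.val ⁻¹' S else {t} := by
  ext y
  simp only [replacePoint, Set.mem_union, Set.mem_ofPred_eq, Set.mem_iUnion, exists_prop]
  constructor
  · rintro (⟨hyT, hyp⟩ | ⟨⟨t, htT, htp⟩, hyS⟩)
    · exact ⟨y, hyT, by simp [hyp]⟩
    · exact ⟨t, htT, by simpa [htp] using hyS⟩
  · rintro ⟨t, htT, hy⟩
    split_ifs at hy with htp
    · exact .inr ⟨⟨t, htT, htp⟩, hy⟩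
    · obtain rfl : y = t := hy
      exact .inl ⟨htT, htp⟩

theorem unionPres_replacePoint (p : L) (S : Set L) : UnionPres (replacePoint p S) := by
  classical
  rw [funext (replacePoint_eq_biUnion p S)]
  exact unionPres_biUnion _

end UnionPres

section Supremum

variable {L : Type*} [CompleteLattice L]

theorem lsup_eq_iSup (T : Set (NZ L)) : lsup T = ⨆ t ∈ T, t.val :=
  sSup_image

theorem lsup_singleton (t : NZ L) : lsup {t} = t.val := by
  rw [lsup, Set.image_singleton, sSup_singleton]

theorem lsup_preimage_val (S : Set L) : lsup (Subtype.val ⁻¹' S) = sSup S := by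
  have nonzero_part : Subtype.val '' (Subtype.val ⁻¹' S : Set (NZ L)) = S \ {⊥} := by
    ext x
    simp [and_comm]
  rw [lsup, nonzero_part, sSup_sdiff_singleton_bot]

theorem lsup_biUnion {ι : Type*} (I : Set ι) (φ : ι → Set (NZ L)) :
    lsup (⋃ i ∈ I, φ i) = ⨆ i ∈ I, lsup (φ i) := by
  simp only [lsup_eq_iSup, iSup_iUnion]

theorem lsup_biUnion_of_lsup_eq {φ : NZ L → Set (NZ L)} (hφ : ∀ t, lsup (φ t) = t.val)
    (T : Set (NZ L)) : lsup (⋃ t ∈ T, φ t) = lsup T := by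
  simp only [lsup_biUnion, hφ, lsup_eq_iSup T]

theorem lsup_replacePoint {p : L} {S : Set L} (hS : sSup S = p) (T : Set (NZ L)) :
    lsup (replacePoint p S T) = lsup T := by
  classical
  rw [replacePoint_eq_biUnion]
  refine lsup_biUnion_of_lsup_eq (fun t => ?_) T
  split_ifs with htp
  · rw [lsup_preimage_val, hS, htp]
  · exact lsup_singleton t

theorem presSup_id : PresSup (id : L → L) :=
  fun _ => sSup_eq_iSup

theorem sSup_triple_of_le_sup {a b c : L} (h : a ≤ b ⊔ c) : sSup {a, b, c} = b ⊔ c := by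
  rw [sSup_insert, sSup_pair, sup_eq_right.mpr h]

end Supremum

theorem stmt11_general {L : Type*} [CompleteLattice L] {p : L} {S : Set L} (hS : sSup S = p) :
    UnionPres (replacePoint p S) ∧
      (∀ T : Set (NZ L), lsup (replacePoint p S T) = lsup T) ∧
      PresSup (id : L → L) ∧
      ∀ T : Set (NZ L), (id : L → L) (lsup T) = lsup (replacePoint p S T) :=
  ⟨unionPres_replacePoint p S, lsup_replacePoint hS, presSup_id,
    fun T => (lsup_replacePoint hS T).symm⟩

theorem stmt11 {L : Type*} [CompleteLattice L]
    (a b c : L) (h1 : a < b ⊔ c) (h2 : ¬ a ≤ b) (h3 : ¬ a ≤ c)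
    (f : Set (NZ L) → Set (NZ L))
    (hfdef : ∀ T : Set (NZ L),
      f T = {y | y ∈ T ∧ y.val ≠ b ⊔ c} ∪
        {y | (∃ t ∈ T, (t : NZ L).val = b ⊔ c) ∧
          (y.val = a ∨ y.val = b ∨ y.val = c)}) :
    UnionPres f ∧
      (∀ T : Set (NZ L), lsup (f T) = lsup T) ∧
      PresSup (id : L → L) ∧
      ∀ T : Set (NZ L), (id : L → L) (lsup T) = lsup (f T) := by
  obtain rfl : f = replacePoint (b ⊔ c) {a, b, c} := funext hfdef
  exact stmt11_general (sSup_triple_of_le_sup h1.le)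
end

section
/- Let L be a complete lattice containing elements a, b, c with a < b ⊔ c, ¬(a ≤ b) and ¬(a ≤ c), and let f : Set L₀ → Set L₀ be defined by f(T) = (T \ {b ⊔ c}) ∪ S, where S = {a, b, c} if b ⊔ c ∈ T and S = ∅ otherwise (all elements viewed in L₀). Then for every map g : L → L preserving arbitrary suprema such that 𝒫g(T) ⊆ f(T) for all T : Set L₀, one has g(a) = ⊥. -/
/-!
Testing `𝒫g ⊆ f` on singletons shows that `g x ∈ {⊥, x}` for every nonzero `x ≠ b ⊔ c`, and that
`g (b ⊔ c)` is `⊥`, `a`, `b` or `c`, hence `g (b ⊔ c) ≠ b ⊔ c`. If `g a ≠ ⊥`, then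
`a = g a ≤ g (b ⊔ c) = g b ⊔ g c`. As `a` lies below neither `b` nor `c`, neither `g b` nor
`g c` can be `⊥`, so `g b = b`, `g c = c` and `g (b ⊔ c) = b ⊔ c`, a contradiction.
-/

theorem mem_dirIm_singleton {L M : Type*} [Bot L] [Bot M] {g : L → M} {x : NZ L} {y : NZ M} :
    y ∈ dirIm g {x} ↔ g x.val = y.val := by
  simp only [dirIm, Set.mem_ofPred_eq, Set.mem_singleton_iff, exists_eq_left]

/-- The map on sets of nonzero elements that removes `u` and, if `u` was present, adds the nonzero
elements of `S` in its place. Taking `S` in `L` rather than in `NZ L` avoids having to prove that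
the replacement values are nonzero. -/
def replaceElem {L : Type*} [Bot L] (u : L) (S : Set L) (T : Set (NZ L)) : Set (NZ L) :=
  {y | y ∈ T ∧ y.val ≠ u} ∪ {y | (∃ t ∈ T, t.val = u) ∧ y.val ∈ S}

theorem mem_replaceElem_singleton {L : Type*} [Bot L] {u : L} {S : Set L} {x y : NZ L} :
    y ∈ replaceElem u S {x} ↔ (y = x ∧ y.val ≠ u) ∨ (x.val = u ∧ y.val ∈ S) := by
  simp only [replaceElem, Set.mem_union, Set.mem_ofPred_eq, Set.mem_singleton_iff,
    exists_eq_left]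

section Replace

variable {L : Type*} [Bot L] {g : L → L} {u x : L} {S : Set L}

theorem apply_cases_of_dirIm_subset_replaceElem (hsub : ∀ T, dirIm g T ⊆ replaceElem u S T)
    (hx : x ≠ ⊥) (hgx : g x ≠ ⊥) : (g x = x ∧ g x ≠ u) ∨ (x = u ∧ g x ∈ S) := by
  have hmem : (⟨g x, hgx⟩ : NZ L) ∈ replaceElem u S {⟨x, hx⟩} :=
    hsub _ (mem_dirIm_singleton.2 rfl)
  simpa only [mem_replaceElem_singleton, Subtype.mk.injEq] using hmem

theorem apply_eq_bot_or_self_of_dirIm_subset_replaceElem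
    (hsub : ∀ T, dirIm g T ⊆ replaceElem u S T) (hx : x ≠ ⊥) (hxu : x ≠ u) :
    g x = ⊥ ∨ g x = x :=
  or_iff_not_imp_left.2 fun hgx =>
    (apply_cases_of_dirIm_subset_replaceElem hsub hx hgx).elim And.left fun h => absurd h.1 hxu

theorem apply_ne_self_of_dirIm_subset_replaceElem
    (hsub : ∀ T, dirIm g T ⊆ replaceElem u S T) (hu : u ≠ ⊥) (huS : u ∉ S) : g u ≠ u := by
  intro hgu
  rcases apply_cases_of_dirIm_subset_replaceElem hsub hu (hgu.trans_ne hu) with ⟨-, hne⟩ | ⟨-, hS⟩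
  · exact hne hgu
  · exact huS (hgu ▸ hS)

end Replace

theorem PresSup.map_sup {L M : Type*} [CompleteLattice L] [CompleteLattice M] {g : L → M}
    (hg : PresSup g) (x y : L) : g (x ⊔ y) = g x ⊔ g y := by
  simpa only [sSup_pair, iSup_pair] using hg {x, y}

section Sup

variable {L : Type*} [SemilatticeSup L] {a b c : L}

theorem sup_notMem_triple (hlt : a < b ⊔ c) (hab : ¬ a ≤ b) (hac : ¬ a ≤ c) :
    b ⊔ c ∉ ({a, b, c} : Set L) := by
  rintro (h | h | h)
  · exact hlt.ne' h
  · exact hab (hlt.le.trans_eq h)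
  · exact hac (hlt.le.trans_eq h)

variable [OrderBot L]

theorem ne_bot_of_le_sup_of_not_le (h : a ≤ b ⊔ c) (hc : ¬ a ≤ c) : b ≠ ⊥ := by
  rintro rfl
  exact hc (h.trans_eq (bot_sup_eq c))

theorem map_sup_eq_sup_of_not_le (g : SupHom L L) (hgb : g b = ⊥ ∨ g b = b)
    (hgc : g c = ⊥ ∨ g c = c) (hb : ¬ g (b ⊔ c) ≤ b) (hc : ¬ g (b ⊔ c) ≤ c) :
    g (b ⊔ c) = b ⊔ c := by
  rw [SupHomClass.map_sup] at hb hc ⊢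
  have hgb' : g b = b := hgb.resolve_left fun h => hc <| by
    rw [h, bot_sup_eq]
    exact hgc.elim (fun h => h.trans_le bot_le) le_of_eq
  have hgc' : g c = c := hgc.resolve_left fun h => hb <| by
    rw [h, sup_bot_eq, hgb']
  rw [hgb', hgc']

theorem stmt12_general {S : Set L} (hlt : a < b ⊔ c) (hab : ¬ a ≤ b) (hac : ¬ a ≤ c)
    (hS : b ⊔ c ∉ S) (g : SupHom L L) (hsub : ∀ T, dirIm g T ⊆ replaceElem (b ⊔ c) S T) :
    g a = ⊥ := by
  have apply_cases {x : L} (hx : x ≠ ⊥) (hxu : x ≠ b ⊔ c) : g x = ⊥ ∨ g x = x :=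
    apply_eq_bot_or_self_of_dirIm_subset_replaceElem hsub hx hxu
  have ha0 : a ≠ ⊥ := fun h => hab (h.trans_le bot_le)
  have hb0 : b ≠ ⊥ := ne_bot_of_le_sup_of_not_le hlt.le hac
  have hc0 : c ≠ ⊥ := ne_bot_of_le_sup_of_not_le (sup_comm b c ▸ hlt.le) hab
  have hb : b ≠ b ⊔ c := fun h => hab (hlt.le.trans_eq h.symm)
  have hc : c ≠ b ⊔ c := fun h => hac (hlt.le.trans_eq h.symm)
  by_contra hga
  have hga' : g a = a := (apply_cases ha0 hlt.ne).resolve_left hga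
  have ha_le : a ≤ g (b ⊔ c) := hga'.ge.trans (OrderHomClass.mono g hlt.le)
  have hfix : g (b ⊔ c) = b ⊔ c :=
    map_sup_eq_sup_of_not_le g (apply_cases hb0 hb) (apply_cases hc0 hc)
      (fun h => hab (ha_le.trans h)) (fun h => hac (ha_le.trans h))
  exact apply_ne_self_of_dirIm_subset_replaceElem hsub (bot_le.trans_lt hlt).ne' hS hfix

end Sup

theorem stmt12 {L : Type*} [CompleteLattice L]
    (a b c : L) (h1 : a < b ⊔ c) (h2 : ¬ a ≤ b) (h3 : ¬ a ≤ c)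
    (f : Set (NZ L) → Set (NZ L))
    (hfdef : ∀ T : Set (NZ L),
      f T = {y | y ∈ T ∧ y.val ≠ b ⊔ c} ∪
        {y | (∃ t ∈ T, (t : NZ L).val = b ⊔ c) ∧
          (y.val = a ∨ y.val = b ∨ y.val = c)})
    (g : L → L) (hg : PresSup g)
    (hsub : ∀ T : Set (NZ L), dirIm g T ⊆ f T) :
    g a = ⊥ :=
  stmt12_general h1 h2 h3 (sup_notMem_triple h1 h2 h3) ⟨g, hg.map_sup⟩
    fun T => (hsub T).trans_eq (hfdef T)
end
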